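/- arXiv:1707.07748 — 4 statements merged into one kernel-verified Lean document; each statement's English description precedes it below -/
import Mathlib

section
/- For distinct primes p > q, the set G₁ = {(x₁,y₁,z₁,x₂,y₂,z₂) ∈ G×G : q·x₁ = p·x₂ and q·y₁ = p·y₂} is a closed subgroup of G×G, and the quotient space G₁/Γ₁, where Γ₁ = G₁ ∩ (Γ×Γ), is compact. -/
noncomputable section
open Filter

/-- The generalized Heisenberg group: `ℝ³` with multiplication
`(x,y,z)·(x',y',z') = (x+x', y+y', z+z'+c(xy'−x'y))`.
The Heisenberg group `G` of the paper is `Heis 1`. -/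
@[ext]
structure Heis (c : ℤ) where
  x : ℝ
  y : ℝ
  z : ℝ

namespace Heis
variable {c : ℤ}
instance : Mul (Heis c) :=
  ⟨fun a b => ⟨a.x + b.x, a.y + b.y, a.z + b.z + (c : ℝ) * (a.x * b.y - b.x * a.y)⟩⟩
instance : One (Heis c) := ⟨⟨0, 0, 0⟩⟩
instance : Inv (Heis c) := ⟨fun a => ⟨-a.x, -a.y, -a.z⟩⟩
lemma mul_def (a b : Heis c) :
    a * b = ⟨a.x + b.x, a.y + b.y, a.z + b.z + (c : ℝ) * (a.x * b.y - b.x * a.y)⟩ := rfl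
lemma one_def : (1 : Heis c) = ⟨0, 0, 0⟩ := rfl
lemma inv_def (a : Heis c) : a⁻¹ = ⟨-a.x, -a.y, -a.z⟩ := rfl
instance : Group (Heis c) where
  mul_assoc a b d := by ext <;> simp [mul_def] <;> ring
  one_mul a := by ext <;> simp [mul_def, one_def]
  mul_one a := by ext <;> simp [mul_def, one_def]
  inv_mul_cancel a := by ext <;> simp [mul_def, one_def, inv_def] <;> ring
/-- The topology of `Heis c`, induced from `ℝ³`. -/
instance : TopologicalSpace (Heis c) :=
  TopologicalSpace.induced (fun a => (a.x, a.y, a.z)) inferInstance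
/-- The lattice of integer points of `Heis c`  (the subgroup `Γ` when `c = 1`). -/
def latt (c : ℤ) : Subgroup (Heis c) where
  carrier := {a | ∃ m n k : ℤ, a = ⟨(m : ℝ), (n : ℝ), (k : ℝ)⟩}
  one_mem' := ⟨0, 0, 0, by ext <;> simp [one_def]⟩
  mul_mem' := by
    rintro a b ⟨m, n, k, rfl⟩ ⟨m', n', k', rfl⟩
    exact ⟨m + m', n + n', k + k' + c * (m * n' - m' * n), by
      ext <;> simp [mul_def] <;> push_cast <;> ring⟩
  inv_mem' := by
    rintro a ⟨m, n, k, rfl⟩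
    exact ⟨-m, -n, -k, by ext <;> simp [inv_def]⟩
end Heis

/-- The 3-dimensional Heisenberg nilmanifold `X = G/Γ` (the space of left cosets,
with the quotient topology). -/
abbrev HeisX : Type := Heis 1 ⧸ Heis.latt 1

/-- The circle `𝕋¹ = ℝ/ℤ`. -/
abbrev T1 : Type := AddCircle (1 : ℝ)

/-- The subgroup `G₁ = {(x₁,y₁,z₁,x₂,y₂,z₂) ∈ G×G : q(x₁,y₁) = p(x₂,y₂)}` of `G × G`. -/
def HeisG1 (p q : ℕ) : Subgroup (Heis 1 × Heis 1) where
  carrier := {g | (q : ℝ) * g.1.x = (p : ℝ) * g.2.x ∧ (q : ℝ) * g.1.y = (p : ℝ) * g.2.y}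
  one_mem' := by simp [Heis.one_def, Prod.fst_one, Prod.snd_one]
  mul_mem' := by
    rintro a b ⟨ha1, ha2⟩ ⟨hb1, hb2⟩
    constructor <;> simp only [Prod.fst_mul, Prod.snd_mul, Heis.mul_def] <;> ring_nf <;>
      nlinarith [ha1, ha2, hb1, hb2]
  inv_mem' := by
    rintro a ⟨ha1, ha2⟩
    constructor <;> simp only [Prod.fst_inv, Prod.snd_inv, Heis.inv_def] <;> nlinarith [ha1, ha2]

/-!
A coset space `G ⧸ Γ` is compact as soon as every `g` can be moved into a fixed compact set by
right multiplication by an element of `Γ`. In `G₁`, the pairs `(x₁, x₂)` and `(y₁, y₂)` lie on the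
rational subspace `q * x = p * x'` of the plane, whose integer points are cocompact in it: this
fixes the horizontal coordinates of `γ ∈ Γ₁`. The central coordinates of `γ` are unconstrained
integers, chosen last so as to bring those of the product into the unit interval.
-/

section CompactQuotient

variable {G : Type*} [Group G] [TopologicalSpace G] {K : Set G}

lemma compactSpace_quotient_of_isCompact {Γ : Subgroup G} (hK : IsCompact K)
    (h : ∀ g : G, ∃ γ ∈ Γ, g * γ ∈ K) : CompactSpace (G ⧸ Γ) := by
  have hcover : ((↑) : G → G ⧸ Γ) '' K = Set.univ := by
    refine Set.eq_univ_of_forall fun x ↦ ?_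
    obtain ⟨g, rfl⟩ := QuotientGroup.mk_surjective x
    obtain ⟨γ, hγ, hgγ⟩ := h g
    exact ⟨g * γ, hgγ, QuotientGroup.mk_mul_of_mem g hγ⟩
  exact ⟨hcover ▸ hK.image QuotientGroup.continuous_mk⟩

lemma compactSpace_quotient_subgroupOf {H Γ : Subgroup G} (hH : IsClosed (H : Set G))
    (hK : IsCompact K) (h : ∀ g ∈ H, ∃ γ ∈ H ⊓ Γ, g * γ ∈ K) :
    CompactSpace (H ⧸ Γ.subgroupOf H) := by
  refine compactSpace_quotient_of_isCompact
    (hH.isClosedEmbedding_subtypeVal.isCompact_preimage hK) fun g ↦ ?_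
  obtain ⟨γ, ⟨hγH, hγΓ⟩, hgγ⟩ := h g g.2
  exact ⟨⟨γ, hγH⟩, Subgroup.mem_subgroupOf.2 hγΓ, hgγ⟩

end CompactQuotient

lemma natCast_mul_add_neg_mul_floor_mem_Icc {R : Type*} [CommRing R] [LinearOrder R]
    [IsStrictOrderedRing R] [FloorRing R] (k : ℕ) (s : R) :
    k * s + (-(k * ⌊s⌋) : ℤ) ∈ Set.Icc (0 : R) k := by
  have hfract : k * s + (-(k * ⌊s⌋) : ℤ) = k * Int.fract s := by
    rw [← Int.self_sub_floor]
    push_cast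
    ring
  rw [hfract]
  exact ⟨mul_nonneg k.cast_nonneg (Int.fract_nonneg s),
    mul_le_of_le_one_right k.cast_nonneg (Int.fract_lt_one s).le⟩

-- The summand `1` in the bound is needed when `p = q = 0`.
lemma exists_int_add_mem_Icc_of_mul_eq_mul {R : Type*} [Field R] [LinearOrder R]
    [IsStrictOrderedRing R] [FloorRing R] {p q : ℕ} {x x' : R} (h : (q : R) * x = p * x') :
    ∃ m m' : ℤ, (q : R) * m = p * m' ∧
      x + m ∈ Set.Icc (0 : R) (p + q + 1) ∧ x' + m' ∈ Set.Icc (0 : R) (p + q + 1) := by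
  have mem_Icc {k : ℕ} (hk : k ≤ p + q + 1) (s : R) :
      k * s + (-(k * ⌊s⌋) : ℤ) ∈ Set.Icc (0 : R) (p + q + 1) :=
    Set.Icc_subset_Icc_right (by exact_mod_cast hk) (natCast_mul_add_neg_mul_floor_mem_Icc k s)
  rcases eq_or_ne (p + q) 0 with hpq | hpq
  · obtain ⟨rfl, rfl⟩ := Nat.add_eq_zero_iff.1 hpq
    have mem_Icc_one (r : R) := mem_Icc (k := 1) le_add_self r
    simp only [Nat.cast_one, one_mul] at mem_Icc_one
    exact ⟨-⌊x⌋, -⌊x'⌋, by rw [Nat.cast_zero, zero_mul, zero_mul], mem_Icc_one x, mem_Icc_one x'⟩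
  · have hpq' : (p + q : R) ≠ 0 := by exact_mod_cast hpq
    let s := (x + x') / (p + q)
    have hs : (p + q) * s = x + x' := mul_div_cancel₀ _ hpq'
    have hx : x = p * s := mul_left_cancel₀ hpq' (by linear_combination h - p * hs)
    have hx' : x' = q * s := mul_left_cancel₀ hpq' (by linear_combination -h - q * hs)
    refine ⟨-(p * ⌊s⌋), -(q * ⌊s⌋), ?_, ?_, ?_⟩
    · push_cast
      ring
    · rw [hx]
      exact mem_Icc (by lia) s
    · rw [hx']
      exact mem_Icc (by lia) s

namespace Heis

variable {c : ℤ}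

/-- The coordinates `(x, y, z)` as a homeomorphism onto `ℝ³`, used to transfer continuity and
compactness from `ℝ³` to the Heisenberg group. -/
def homeomorphProd (c : ℤ) : Heis c ≃ₜ ℝ × ℝ × ℝ where
  toFun a := (a.x, a.y, a.z)
  invFun v := ⟨v.1, v.2.1, v.2.2⟩
  continuous_toFun := continuous_induced_dom
  continuous_invFun := continuous_induced_rng.2 continuous_id

@[fun_prop]
lemma continuous_x : Continuous (x : Heis c → ℝ) :=
  continuous_fst.comp (homeomorphProd c).continuous

@[fun_prop]
lemma continuous_y : Continuous (y : Heis c → ℝ) :=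
  (continuous_fst.comp continuous_snd).comp (homeomorphProd c).continuous

lemma isCompact_setOf_coords_mem {s t u : Set ℝ} (hs : IsCompact s) (ht : IsCompact t)
    (hu : IsCompact u) : IsCompact {a : Heis c | a.x ∈ s ∧ a.y ∈ t ∧ a.z ∈ u} :=
  (homeomorphProd c).isCompact_preimage.2 (hs.prod (ht.prod hu))

lemma exists_mem_latt_mul_z_mem_Icc (a : Heis c) (m n : ℤ) :
    ∃ γ ∈ latt c, γ.x = m ∧ γ.y = n ∧ (a * γ).z ∈ Set.Icc (0 : ℝ) 1 := by
  let w := a.z + c * (a.x * n - m * a.y)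
  have hz : (a * ⟨m, n, (-⌊w⌋ : ℤ)⟩ : Heis c).z = Int.fract w := by
    rw [← Int.self_sub_floor, mul_def]
    push_cast
    ring
  exact ⟨⟨m, n, (-⌊w⌋ : ℤ)⟩, ⟨m, n, -⌊w⌋, rfl⟩, rfl, rfl,
    hz ▸ ⟨Int.fract_nonneg w, (Int.fract_lt_one w).le⟩⟩

end Heis

namespace HeisG1

lemma isClosed (p q : ℕ) : IsClosed (HeisG1 p q : Set (Heis 1 × Heis 1)) := by
  have hx : IsClosed {g : Heis 1 × Heis 1 | (q : ℝ) * g.1.x = p * g.2.x} :=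
    isClosed_eq (by fun_prop) (by fun_prop)
  have hy : IsClosed {g : Heis 1 × Heis 1 | (q : ℝ) * g.1.y = p * g.2.y} :=
    isClosed_eq (by fun_prop) (by fun_prop)
  exact hx.inter hy

/-- The box `[0, p + q + 1] × [0, p + q + 1] × [0, 1]` in `Heis 1`. Its square `box × box` is a
compact set that meets every left coset of `Γ₁` in `G₁`. -/
def box (p q : ℕ) : Set (Heis 1) :=
  {a | a.x ∈ Set.Icc (0 : ℝ) (p + q + 1) ∧ a.y ∈ Set.Icc (0 : ℝ) (p + q + 1) ∧
    a.z ∈ Set.Icc (0 : ℝ) 1}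

lemma isCompact_box (p q : ℕ) : IsCompact (box p q) :=
  Heis.isCompact_setOf_coords_mem isCompact_Icc isCompact_Icc isCompact_Icc

lemma exists_mul_mem_box_prod_box {p q : ℕ} {g : Heis 1 × Heis 1} (hg : g ∈ HeisG1 p q) :
    ∃ γ ∈ HeisG1 p q ⊓ (Heis.latt 1).prod (Heis.latt 1), g * γ ∈ box p q ×ˢ box p q := by
  obtain ⟨m, m', hm, hxm, hxm'⟩ := exists_int_add_mem_Icc_of_mul_eq_mul hg.1
  obtain ⟨n, n', hn, hyn, hyn'⟩ := exists_int_add_mem_Icc_of_mul_eq_mul hg.2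
  obtain ⟨γ, hγ, hγx, hγy, hz⟩ := Heis.exists_mem_latt_mul_z_mem_Icc g.1 m n
  obtain ⟨γ', hγ', hγx', hγy', hz'⟩ := Heis.exists_mem_latt_mul_z_mem_Icc g.2 m' n'
  rw [← hγx] at hm hxm
  rw [← hγx'] at hm hxm'
  rw [← hγy] at hn hyn
  rw [← hγy'] at hn hyn'
  exact ⟨(γ, γ'), ⟨⟨hm, hn⟩, hγ, hγ'⟩, ⟨hxm, hyn, hz⟩, hxm', hyn', hz'⟩

end HeisG1

theorem stmt3_general (p q : ℕ) :
    IsClosed (HeisG1 p q : Set (Heis 1 × Heis 1)) ∧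
      CompactSpace (HeisG1 p q ⧸ ((Heis.latt 1).prod (Heis.latt 1)).subgroupOf (HeisG1 p q)) :=
  ⟨HeisG1.isClosed p q, compactSpace_quotient_subgroupOf (HeisG1.isClosed p q)
    ((HeisG1.isCompact_box p q).prod (HeisG1.isCompact_box p q))
    fun _ ↦ HeisG1.exists_mul_mem_box_prod_box⟩

/-- For distinct primes `p > q`, the set
`G₁ = {(x₁,y₁,z₁,x₂,y₂,z₂) ∈ G×G : q·x₁ = p·x₂, q·y₁ = p·y₂}` is a closed subgroup of
`G×G`, and `G₁/Γ₁` is compact, where `Γ₁ = G₁ ∩ (Γ×Γ)`. -/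
theorem stmt3 (p q : ℕ) (hp : p.Prime) (hq : q.Prime) (hpq : q < p) :
    IsClosed ((HeisG1 p q : Subgroup (Heis 1 × Heis 1)) : Set (Heis 1 × Heis 1)) ∧
      CompactSpace
        ((HeisG1 p q) ⧸ (((Heis.latt 1).prod (Heis.latt 1)).subgroupOf (HeisG1 p q))) :=
  stmt3_general p q
end
end

section
/- Let x₀ = Γ be the identity coset in X and let p > q be distinct primes. For every n ∈ ℕ, the pair (T^{pn}x₀, T^{qn}x₀) ∈ X×X lies in the image of G₁ = {(x₁,y₁,z₁,x₂,y₂,z₂) ∈ G×G : q·x₁ = p·x₂ and q·y₁ = p·y₂} under the natural projection G×G → X×X. -/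
noncomputable section
open Filter

/-! The horizontal part `(x, y)` of `(x, y, z)` is a homomorphism to `ℝ²`, and `T` moves every point
of `X` by an element of horizontal part `(α, β)`. Hence `T^m x₀` has a representative of horizontal
part `m(α, β)`, and `q · pn(α, β) = p · qn(α, β)` is the condition defining `G₁`. -/

theorem exists_smul_eq_iterate {M N X : Type*} [Monoid M] [Monoid N] [MulAction M X]
    (π : M →* N) {a : N} {T : X → X} (hT : ∀ x, ∃ t : M, π t = a ∧ t • x = T x) (m : ℕ) (x : X) :
    ∃ t : M, π t = a ^ m ∧ t • x = T^[m] x := by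
  induction m with
  | zero => exact ⟨1, by simp⟩
  | succ m ih =>
    obtain ⟨t, ht, htx⟩ := ih
    obtain ⟨s, hs, hsx⟩ := hT (T^[m] x)
    refine ⟨s * t, by rw [map_mul, hs, ht, pow_succ'], ?_⟩
    rw [mul_smul, htx, hsx, Function.iterate_succ_apply']

/-- The projection `(x, y, z) ↦ (x, y)` of the Heisenberg group onto its horizontal plane `ℝ²`.
The target is written multiplicatively to make this a `MonoidHom`. -/
def Heis.horizontal {c : ℤ} : Heis c →* Multiplicative (ℝ × ℝ) where
  toFun g := Multiplicative.ofAdd (g.x, g.y)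
  map_one' := rfl
  map_mul' _ _ := rfl

theorem mem_heisG1_iff_horizontal_pow_eq {p q : ℕ} {g : Heis 1 × Heis 1} :
    g ∈ HeisG1 p q ↔ Heis.horizontal g.1 ^ q = Heis.horizontal g.2 ^ p := by
  change (q : ℝ) * g.1.x = p * g.2.x ∧ (q : ℝ) * g.1.y = p * g.2.y ↔
    q • (g.1.x, g.1.y) = p • (g.2.x, g.2.y)
  simp only [Prod.smul_mk, Prod.mk.injEq, nsmul_eq_mul]

theorem exists_horizontal_eq_and_smul_eq_of_skewProduct {α β : ℝ} {h : T1 × T1 → T1}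
    {T : HeisX → HeisX}
    (hT : ∀ x y z r : ℝ, (r : T1) = h ((x : T1), (y : T1)) →
      T (QuotientGroup.mk (⟨x, y, z⟩ : Heis 1)) =
        QuotientGroup.mk ((⟨α, β, r⟩ : Heis 1) * ⟨x, y, z⟩))
    (u : HeisX) :
    ∃ t : Heis 1, Heis.horizontal t = Multiplicative.ofAdd (α, β) ∧ t • u = T u := by
  obtain ⟨⟨x, y, z⟩, rfl⟩ := QuotientGroup.mk_surjective u
  obtain ⟨r, hr⟩ := QuotientAddGroup.mk_surjective (h ((x : T1), (y : T1)))
  exact ⟨⟨α, β, r⟩, rfl, (hT x y z r hr).symm⟩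

theorem stmt4_general {a : Multiplicative (ℝ × ℝ)} {T : HeisX → HeisX}
    (hT : ∀ u, ∃ t : Heis 1, Heis.horizontal t = a ∧ t • u = T u) (p q n : ℕ) :
    ∃ g ∈ HeisG1 p q,
      (QuotientGroup.mk g.1 : HeisX) = T^[p * n] (QuotientGroup.mk 1) ∧
      (QuotientGroup.mk g.2 : HeisX) = T^[q * n] (QuotientGroup.mk 1) := by
  have exists_rep (m : ℕ) : ∃ g : Heis 1, Heis.horizontal g = a ^ m ∧
      (QuotientGroup.mk g : HeisX) = T^[m] (QuotientGroup.mk 1) := by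
    simpa only [MulAction.Quotient.smul_mk, smul_eq_mul, mul_one] using
      exists_smul_eq_iterate Heis.horizontal hT m (QuotientGroup.mk 1)
  obtain ⟨g₁, horizontal_g₁, mk_g₁⟩ := exists_rep (p * n)
  obtain ⟨g₂, horizontal_g₂, mk_g₂⟩ := exists_rep (q * n)
  refine ⟨(g₁, g₂), mem_heisG1_iff_horizontal_pow_eq.mpr ?_, mk_g₁, mk_g₂⟩
  calc Heis.horizontal g₁ ^ q = a ^ (p * n * q) := by rw [horizontal_g₁, ← pow_mul]
    _ = a ^ (q * n * p) := congrArg (a ^ ·) (by ring)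
    _ = Heis.horizontal g₂ ^ p := by rw [horizontal_g₂, ← pow_mul]

/-- Let `x₀ = Γ` be the identity coset of `X` and `p > q` distinct primes.
For every `n ∈ ℕ`, the pair `(T^{pn}x₀, T^{qn}x₀)` lies in the image of `G₁` under the
natural projection `G×G → X×X`. -/
theorem stmt4
    (α β : ℝ) (h : T1 × T1 → T1) (hcont : Continuous h)
    (T : HeisX → HeisX)
    (hT : ∀ x y z r : ℝ, (r : T1) = h ((x : T1), (y : T1)) →
      T (QuotientGroup.mk (⟨x, y, z⟩ : Heis 1)) =
        QuotientGroup.mk ((⟨α, β, r⟩ : Heis 1) * ⟨x, y, z⟩))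
    (x₀ : HeisX) (hx₀ : x₀ = QuotientGroup.mk (1 : Heis 1))
    (p q : ℕ) (hp : p.Prime) (hq : q.Prime) (hpq : q < p) (n : ℕ) :
    ∃ g ∈ HeisG1 p q,
      (QuotientGroup.mk g.1 : HeisX) = T^[p * n] x₀ ∧
      (QuotientGroup.mk g.2 : HeisX) = T^[q * n] x₀ := by
  subst hx₀
  exact stmt4_general (exists_horizontal_eq_and_smul_eq_of_skewProduct hT) p q n
end
end

section
/- Let p > q be distinct primes and let f : X → ℂ be continuous with vertical oscillation of frequency ξ for some nonzero integer ξ. Then ∫_{[0,1)⁴} f((px, py, z₁)Γ) · conj(f((qx, qy, z₂)Γ)) dx dy dz₁ dz₂ = 0. -/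
noncomputable section
open Filter

open MeasureTheory

/-- A continuous `f : X → ℂ` has vertical oscillation of frequency `ξ ∈ ℤ` if
`f((0,0,z)·τ) = e^{2πiξz}·f(τ)` for every `τ ∈ X` and `z ∈ ℝ`. -/
def VerticalOsc (ξ : ℤ) (f : HeisX → ℂ) : Prop :=
  ∀ (τ : HeisX) (z : ℝ),
    f ((⟨0, 0, z⟩ : Heis 1) • τ) =
      Complex.exp (2 * Real.pi * Complex.I * (ξ : ℂ) * (z : ℂ)) * f τ

theorem integral_Ico_exp_two_pi_mul_I_int_mul_eq_zero {ξ : ℤ} (hξ : ξ ≠ 0) (t : ℝ) :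
    ∫ z in Set.Ico t (t + 1),
      Complex.exp (2 * Real.pi * Complex.I * (ξ : ℂ) * (z : ℂ)) = 0 := by
  have hc : 2 * Real.pi * Complex.I * (ξ : ℂ) ≠ 0 :=
    mul_ne_zero Complex.two_pi_I_ne_zero (Int.cast_ne_zero.mpr hξ)
  have hexp : Complex.exp (2 * Real.pi * Complex.I * (ξ : ℂ)) = 1 := by
    rw [mul_comm, Complex.exp_int_mul_two_pi_mul_I]
  rw [integral_Ico_eq_integral_Ioc, ← intervalIntegral.integral_of_le (by linarith),
    integral_exp_mul_complex hc, Complex.ofReal_add, Complex.ofReal_one, mul_add, mul_one,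
    Complex.exp_add, hexp, mul_one, sub_self, zero_div]

theorem Heis.vertical_mul_mk {c : ℤ} (w x y z : ℝ) :
    (⟨0, 0, w⟩ : Heis c) * ⟨x, y, z⟩ = ⟨x, y, w + z⟩ := by
  simp [Heis.mul_def]

namespace VerticalOsc

variable {ξ : ℤ} {f : HeisX → ℂ}

theorem integral_vertical_smul_eq_zero (hf : VerticalOsc ξ f) (hξ : ξ ≠ 0) (τ : HeisX) (t : ℝ) :
    ∫ z in Set.Ico t (t + 1), f ((⟨0, 0, z⟩ : Heis 1) • τ) = 0 := by
  simp_rw [hf τ]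
  rw [integral_mul_const, integral_Ico_exp_two_pi_mul_I_int_mul_eq_zero hξ, zero_mul]

theorem integral_mk_eq_zero (hf : VerticalOsc ξ f) (hξ : ξ ≠ 0) (x y t : ℝ) :
    ∫ z in Set.Ico t (t + 1), f (QuotientGroup.mk (⟨x, y, z⟩ : Heis 1)) = 0 := by
  simpa only [MulAction.Quotient.smul_mk, smul_eq_mul, Heis.vertical_mul_mk, add_zero]
    using hf.integral_vertical_smul_eq_zero hξ (QuotientGroup.mk ⟨x, y, 0⟩) t

end VerticalOsc

theorem stmt9_general (p q : ℝ) {ξ : ℤ} (hξ : ξ ≠ 0) (f : HeisX → ℂ) {g : HeisX → ℂ}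
    (hg : VerticalOsc ξ g) :
    ∫ x in Set.Ico (0 : ℝ) 1, ∫ y in Set.Ico (0 : ℝ) 1, ∫ z₁ in Set.Ico (0 : ℝ) 1,
      ∫ z₂ in Set.Ico (0 : ℝ) 1,
        f (QuotientGroup.mk (⟨p * x, p * y, z₁⟩ : Heis 1)) *
          (starRingEnd ℂ) (g (QuotientGroup.mk (⟨q * x, q * y, z₂⟩ : Heis 1))) = 0 := by
  have integral_fibre (x y : ℝ) :
      ∫ z in Set.Ico (0 : ℝ) 1, g (QuotientGroup.mk (⟨x, y, z⟩ : Heis 1)) = 0 := by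
    simpa only [zero_add] using hg.integral_mk_eq_zero hξ x y 0
  simp only [integral_const_mul, integral_conj, integral_fibre, map_zero, mul_zero,
    integral_zero]

/-- If `p > q` are distinct primes and `f : X → ℂ` is continuous with
vertical oscillation of some nonzero frequency `ξ`, then
`∫_{[0,1)⁴} f((px,py,z₁)Γ)·conj(f((qx,qy,z₂)Γ)) dx dy dz₁ dz₂ = 0`. -/
theorem stmt9
    (p q : ℕ) (hp : p.Prime) (hq : q.Prime) (hpq : q < p)
    (ξ : ℤ) (hξ : ξ ≠ 0) (f : HeisX → ℂ) (hf : Continuous f) (hosc : VerticalOsc ξ f) :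
    ∫ x in Set.Ico (0 : ℝ) 1, ∫ y in Set.Ico (0 : ℝ) 1, ∫ z₁ in Set.Ico (0 : ℝ) 1,
      ∫ z₂ in Set.Ico (0 : ℝ) 1,
        f (QuotientGroup.mk (⟨p * x, p * y, z₁⟩ : Heis 1)) *
          (starRingEnd ℂ) (f (QuotientGroup.mk (⟨q * x, q * y, z₂⟩ : Heis 1))) = 0 :=
  stmt9_general p q hξ f hosc
end
end

section
/- T is uniquely ergodic (there is exactly one T-invariant Borel probability measure on Ω) if and only if for every integer k ≥ 1 there is no Borel measurable function R : Ω₀ → 𝕋¹ satisfying R(T₀ω₀) = R(ω₀) + k·g(ω₀) for γ₀-almost every ω₀ ∈ Ω₀. -/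
/-!
A solution `R` of `R ∘ T₀ = R + k • g` makes `(ω, ζ) ↦ k • ζ - R ω` an invariant function of the
skew product. It is not almost everywhere constant for the product of `γ₀` with Haar measure, so
this product is not ergodic, whereas the invariant measure of a uniquely ergodic map is.

Conversely, disintegrate an invariant probability measure over its marginal, which is `γ₀`. Its
`k`-th fiberwise Fourier coefficient satisfies `h ∘ T₀ = e(k • g) h`. By ergodicity of `γ₀` either
`h = 0` almost everywhere, or `h` vanishes almost nowhere and its argument is a solution `R`.
Without solutions all nontrivial coefficients vanish, so almost every fiber measure is Haar measure.
-/

noncomputable section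
open MeasureTheory Filter

open ProbabilityTheory AddCircle
open scoped InnerProductSpace

lemma ae_eq_of_integral_inner_eq {α 𝕜 E : Type*} [RCLike 𝕜] [NormedAddCommGroup E]
    [InnerProductSpace 𝕜 E] [MeasurableSpace α] {μ : Measure α} {f h : α → E}
    (hf : MemLp f 2 μ) (hh : MemLp h 2 μ)
    (hinner : ∫ x, ⟪f x, h x⟫_𝕜 ∂μ = ((∫ x, ‖f x‖ ^ 2 ∂μ : ℝ) : 𝕜))
    (hnorm : ∫ x, ‖h x‖ ^ 2 ∂μ = ∫ x, ‖f x‖ ^ 2 ∂μ) :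
    f =ᵐ[μ] h := by
  have hf_sq : Integrable (fun x => ‖f x‖ ^ 2) μ := hf.integrable_norm_pow two_ne_zero
  have hh_sq : Integrable (fun x => ‖h x‖ ^ 2) μ := hh.integrable_norm_pow two_ne_zero
  have hsub_sq : Integrable (fun x => ‖f x - h x‖ ^ 2) μ :=
    (hf.sub hh).integrable_norm_pow two_ne_zero
  have hinner_int : Integrable (fun x => ⟪f x, h x⟫_𝕜) μ :=
    (hf.norm.integrable_mul hh.norm).mono' (hf.1.inner hh.1)
      (Eventually.of_forall fun x => norm_inner_le_norm (f x) (h x))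
  have hre : ∫ x, RCLike.re ⟪f x, h x⟫_𝕜 ∂μ = ∫ x, ‖f x‖ ^ 2 ∂μ := by
    rw [integral_re hinner_int, hinner, RCLike.ofReal_re]
  have hre_int : Integrable (fun x => 2 * RCLike.re ⟪f x, h x⟫_𝕜) μ := hinner_int.re.const_mul 2
  have hzero : ∫ x, ‖f x - h x‖ ^ 2 ∂μ = 0 := by
    simp_rw [norm_sub_sq (𝕜 := 𝕜)]
    rw [integral_add (by exact hf_sq.sub hre_int) hh_sq, integral_sub hf_sq hre_int,
      integral_const_mul, hre, hnorm]
    ring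
  filter_upwards [(integral_eq_zero_iff_of_nonneg (fun x => by positivity) hsub_sq).1 hzero]
    with x hx
  simpa [sub_eq_zero] using hx

section UniqueErgodicity

/-- Unique ergodicity of a map `S`: there is exactly one `S`-invariant probability measure. -/
def UniquelyErgodic {X : Type*} [MeasurableSpace X] (S : X → X) : Prop :=
  ∃! μ : Measure X, IsProbabilityMeasure μ ∧ μ.map S = μ

variable {X : Type*} [MeasurableSpace X] {S : X → X} {μ : Measure X} [IsProbabilityMeasure μ]

lemma UniquelyErgodic.ergodic (hS : UniquelyErgodic S) (hμ : MeasurePreserving S μ μ) :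
    Ergodic S μ :=
  .of_mem_extremePoints ⟨⟨hμ, inferInstance⟩, fun _ hν _ _ _ =>
    hS.unique ⟨hν.2, hν.1.map_eq⟩ ⟨inferInstance, hμ.map_eq⟩⟩

end UniqueErgodicity

section SkewProduct

variable {X G : Type*} [MeasurableSpace X] [MeasurableSpace G] {S : X → X} {g : X → G}

/-- The skew product of the base map `S` with the cocycle `g`. -/
def skewProduct [Add G] (S : X → X) (g : X → G) (p : X × G) : X × G :=
  (S p.1, p.2 + g p.1)

lemma measurable_skewProduct [Add G] [MeasurableAdd₂ G] (hS : Measurable S) (hg : Measurable g) :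
    Measurable (skewProduct S g) :=
  (hS.comp measurable_fst).prodMk (measurable_snd.add (hg.comp measurable_fst))

lemma measurePreserving_skewProduct [Add G] [MeasurableAdd₂ G] {μ : Measure X} {ν : Measure G}
    [SFinite μ] [SFinite ν] [ν.IsAddRightInvariant]
    (hS : MeasurePreserving S μ μ) (hg : Measurable g) :
    MeasurePreserving (skewProduct S g) (μ.prod ν) (μ.prod ν) :=
  hS.skew_product (measurable_snd.add (hg.comp measurable_fst))
    (Eventually.of_forall fun x => map_add_right_eq_self ν (g x))

lemma measurePreserving_fst_of_skewProduct [Add G] {ρ : Measure (X × G)} (hS : Measurable S)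
    (hρ : MeasurePreserving (skewProduct S g) ρ ρ) :
    MeasurePreserving S ρ.fst ρ.fst :=
  .of_semiconj ⟨measurable_fst, rfl⟩ hρ (fun _ => rfl) hS

lemma UniquelyErgodic.exists_kernel_of_skewProduct [Add G] [StandardBorelSpace G] [Nonempty G]
    {μ : Measure X} [IsProbabilityMeasure μ] (hS : UniquelyErgodic S)
    (hμ : MeasurePreserving S μ μ) {ρ : Measure (X × G)} [IsProbabilityMeasure ρ]
    (hρ : MeasurePreserving (skewProduct S g) ρ ρ) :
    ∃ κ : Kernel X G, IsMarkovKernel κ ∧ μ ⊗ₘ κ = ρ := by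
  have hfst : ρ.fst = μ := hS.unique
    ⟨inferInstance, (measurePreserving_fst_of_skewProduct hμ.measurable hρ).map_eq⟩
    ⟨inferInstance, hμ.map_eq⟩
  exact ⟨ρ.condKernel, inferInstance, hfst ▸ ρ.disintegrate ρ.condKernel⟩

end SkewProduct

section Coboundary

/-- `c` is an additive coboundary over `S` modulo `μ`-null sets: the cohomological equation
`R ∘ S = R + c` has a measurable solution `R` almost everywhere. -/
def IsAddCoboundary {X A : Type*} [MeasurableSpace X] [MeasurableSpace A] [Add A] (S : X → X)
    (μ : Measure X) (c : X → A) : Prop :=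
  ∃ R : X → A, Measurable R ∧ ∀ᵐ x ∂μ, R (S x) = R x + c x

variable {T : ℝ}

/-- The argument of a complex number, rescaled to the circle of length `T`. At `0` it takes the
junk value `0`. -/
def circlePhase (T : ℝ) (z : ℂ) : AddCircle T := ((T / (2 * Real.pi) * z.arg : ℝ) : AddCircle T)

lemma measurable_coe_toCircle : Measurable fun a : AddCircle T => (a.toCircle : ℂ) :=
  (continuous_subtype_val.comp continuous_toCircle).measurable

lemma measurable_circlePhase : Measurable (circlePhase T) :=
  AddCircle.measurable_mk'.comp (Complex.measurable_arg.const_mul _)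

variable [hT : Fact (0 < T)]

lemma norm_mul_toCircle_circlePhase (z : ℂ) : ‖z‖ * ((circlePhase T z).toCircle : ℂ) = z := by
  have hscale : 2 * Real.pi / T * (T / (2 * Real.pi) * z.arg) = z.arg := by
    field_simp [hT.out.ne']
  rw [circlePhase, toCircle_apply_mk, hscale, Circle.coe_exp, Complex.norm_mul_exp_arg_mul_I]

lemma circlePhase_toCircle_mul (a : AddCircle T) {z : ℂ} (hz : z ≠ 0) :
    circlePhase T (a.toCircle * z) = circlePhase T z + a := by
  refine injective_toCircle hT.out.ne' (Circle.ext ?_)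
  have hnorm : (‖z‖ : ℂ) ≠ 0 := by simpa using hz
  apply mul_left_cancel₀ hnorm
  calc (‖z‖ : ℂ) * (circlePhase T (a.toCircle * z)).toCircle
      = ‖a.toCircle * z‖ * (circlePhase T (a.toCircle * z)).toCircle := by
        rw [norm_mul, Circle.norm_coe, one_mul]
    _ = a.toCircle * (‖z‖ * (circlePhase T z).toCircle) := by
      simp only [norm_mul_toCircle_circlePhase]
    _ = ‖z‖ * ((circlePhase T z + a).toCircle : ℂ) := by
      rw [toCircle_add, Circle.coe_mul]; ring

variable {X : Type*} [MeasurableSpace X] {S : X → X} {μ : Measure X}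

-- The modulus of `h` is invariant, so by ergodicity `h` vanishes almost nowhere unless it is
-- almost everywhere zero; its phase then solves the cohomological equation.
lemma ae_eq_zero_of_not_isAddCoboundary (hS : Ergodic S μ) {c : X → AddCircle T} {h : X → ℂ}
    (hh : Measurable h) (hcomp : ∀ᵐ x ∂μ, h (S x) = (c x).toCircle * h x)
    (hc : ¬ IsAddCoboundary S μ c) :
    ∀ᵐ x ∂μ, h x = 0 := by
  have hnorm_comp : (fun x => ‖h x‖) ∘ S =ᵐ[μ] fun x => ‖h x‖ := by
    filter_upwards [hcomp] with x hx
    simp [hx, Circle.norm_coe]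
  obtain ⟨r, hr⟩ := hS.ae_eq_const_of_ae_eq_comp₀ hh.norm.nullMeasurable hnorm_comp
  rcases eq_or_ne r 0 with rfl | hr0
  · filter_upwards [hr] with x hx using norm_eq_zero.1 hx
  · refine absurd ⟨fun x => circlePhase T (h x), measurable_circlePhase.comp hh, ?_⟩ hc
    filter_upwards [hcomp, hr] with x hx hxr
    rw [hx, circlePhase_toCircle_mul]
    exact norm_ne_zero_iff.1 (hxr.trans_ne hr0)

end Coboundary

section FiberCoeff

variable {T : ℝ} {X G : Type*} [MeasurableSpace X] [MeasurableSpace G]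
  {κ : Kernel X G} {χ : G → AddCircle T}

/-- The Fourier coefficient of the fiber measures `κ x` at the character `toCircle ∘ χ`. -/
def fiberCoeff (κ : Kernel X G) (χ : G → AddCircle T) (x : X) : ℂ :=
  ∫ y, ((χ y).toCircle : ℂ) ∂κ x

lemma measurable_fiberCoeff [IsSFiniteKernel κ] (hχ : Measurable χ) :
    Measurable (fiberCoeff κ χ) :=
  ((measurable_coe_toCircle.comp hχ).stronglyMeasurable.integral_kernel).measurable

lemma norm_fiberCoeff_le_one [IsMarkovKernel κ] (x : X) : ‖fiberCoeff κ χ x‖ ≤ 1 := by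
  simpa [fiberCoeff] using norm_integral_le_of_norm_le_const (μ := κ x)
    (Eventually.of_forall fun y => (Circle.norm_coe (χ y).toCircle).le)

lemma integral_compProd_mul_toCircle [IsMarkovKernel κ] {μ : Measure X} [IsFiniteMeasure μ]
    (hχ : Measurable χ) {f : X → ℂ} (hf : Measurable f) {C : ℝ} (hfC : ∀ x, ‖f x‖ ≤ C) :
    ∫ p, f p.1 * ((χ p.2).toCircle : ℂ) ∂(μ ⊗ₘ κ) = ∫ x, f x * fiberCoeff κ χ x ∂μ := by
  have hint : Integrable (fun p : X × G => f p.1 * ((χ p.2).toCircle : ℂ)) (μ ⊗ₘ κ) :=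
    .of_bound ((hf.comp measurable_fst).mul
      (measurable_coe_toCircle.comp (hχ.comp measurable_snd))).aestronglyMeasurable C
      (Eventually.of_forall fun p => by simpa [Circle.norm_coe] using hfC p.1)
  rw [Measure.integral_compProd hint]
  simp only [integral_const_mul, fiberCoeff]

variable [AddMonoid G] {S : X → X} {g : X → G} {μ : Measure X}
  [IsMarkovKernel κ] {χ : G →+ AddCircle T}

lemma integral_comp_mul_fiberCoeff [IsFiniteMeasure μ] (hS : Measurable S) (hg : Measurable g)
    (hκ : MeasurePreserving (skewProduct S g) (μ ⊗ₘ κ) (μ ⊗ₘ κ)) (hχ : Measurable χ)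
    {f : X → ℂ} (hf : Measurable f) {C : ℝ} (hfC : ∀ x, ‖f x‖ ≤ C) :
    ∫ x, f (S x) * ((χ (g x)).toCircle * fiberCoeff κ χ x) ∂μ =
      ∫ x, f x * fiberCoeff κ χ x ∂μ := by
  have hmeas : Measurable fun p : X × G => f p.1 * ((χ p.2).toCircle : ℂ) :=
    (hf.comp measurable_fst).mul (measurable_coe_toCircle.comp (hχ.comp measurable_snd))
  symm
  calc ∫ x, f x * fiberCoeff κ χ x ∂μ
      = ∫ p, f p.1 * ((χ p.2).toCircle : ℂ) ∂(μ ⊗ₘ κ) :=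
        (integral_compProd_mul_toCircle hχ hf hfC).symm
    _ = ∫ p, f (S p.1) * ((χ (p.2 + g p.1)).toCircle : ℂ) ∂(μ ⊗ₘ κ) := by
        rw [← hκ.map_eq, integral_map hκ.aemeasurable hmeas.aestronglyMeasurable, hκ.map_eq]
        rfl
    _ = ∫ p, f (S p.1) * ((χ (g p.1)).toCircle : ℂ) * ((χ p.2).toCircle : ℂ) ∂(μ ⊗ₘ κ) := by
        simp only [map_add, toCircle_add, Circle.coe_mul, mul_left_comm, mul_comm]
    _ = ∫ x, f (S x) * ((χ (g x)).toCircle : ℂ) * fiberCoeff κ χ x ∂μ :=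
        integral_compProd_mul_toCircle (f := fun x => f (S x) * ((χ (g x)).toCircle : ℂ)) hχ
          ((hf.comp hS).mul (measurable_coe_toCircle.comp (hχ.comp hg)))
          (fun x => by simpa [Circle.norm_coe] using hfC (S x))
    _ = ∫ x, f (S x) * ((χ (g x)).toCircle * fiberCoeff κ χ x) ∂μ := by
        simp only [mul_assoc]

-- `S` need not be invertible, so the fibers cannot be transported by uniqueness of disintegrations.
-- Instead, testing invariance against `conj h` shows that `h ∘ S` and `(χ ∘ g) h`, which have the
-- same `L²` norm, attain equality in the Cauchy-Schwarz inequality.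
lemma fiberCoeff_comp_ae_eq [IsFiniteMeasure μ] (hS : MeasurePreserving S μ μ) (hg : Measurable g)
    (hκ : MeasurePreserving (skewProduct S g) (μ ⊗ₘ κ) (μ ⊗ₘ κ)) (hχ : Measurable χ) :
    ∀ᵐ x ∂μ, fiberCoeff κ χ (S x) = (χ (g x)).toCircle * fiberCoeff κ χ x := by
  set h := fiberCoeff κ χ
  have hh : Measurable h := measurable_fiberCoeff hχ
  have hmem : MemLp h 2 μ :=
    .of_bound hh.aestronglyMeasurable 1 (Eventually.of_forall norm_fiberCoeff_le_one)
  have hmem_twist : MemLp (fun x => ((χ (g x)).toCircle : ℂ) * h x) 2 μ :=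
    hmem.of_le ((measurable_coe_toCircle.comp (hχ.comp hg)).mul hh).aestronglyMeasurable
      (Eventually.of_forall fun x => by simp [Circle.norm_coe])
  have hnorm_comp : ∫ x, ‖h (S x)‖ ^ 2 ∂μ = ∫ x, ‖h x‖ ^ 2 ∂μ := by
    conv_rhs => rw [← hS.map_eq]
    exact (integral_map hS.aemeasurable (hh.norm.pow_const 2).aestronglyMeasurable).symm
  refine ae_eq_of_integral_inner_eq (𝕜 := ℂ) (hmem.comp_measurePreserving hS) hmem_twist ?_ ?_
  · calc ∫ x, ⟪h (S x), (χ (g x)).toCircle * h x⟫_ℂ ∂μ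
        = ∫ x, star (h (S x)) * ((χ (g x)).toCircle * h x) ∂μ := by
          simp only [RCLike.inner_apply', RCLike.star_def]
      _ = ∫ x, star (h x) * h x ∂μ :=
          integral_comp_mul_fiberCoeff hS.measurable hg hκ hχ
            (Complex.continuous_conj.measurable.comp hh)
            fun x => (norm_star _).trans_le (norm_fiberCoeff_le_one x)
      _ = ((∫ x, ‖h (S x)‖ ^ 2 ∂μ : ℝ) : ℂ) := by
          rw [hnorm_comp, ← integral_complex_ofReal]
          simp only [RCLike.star_def, Complex.conj_mul', Complex.ofReal_pow]
  · simpa [Circle.norm_coe] using hnorm_comp.symm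

end FiberCoeff

section Furstenberg

variable {T : ℝ} {X G : Type*} [MeasurableSpace X] [MeasurableSpace G] [AddMonoid G]
  {S : X → X} {g : X → G} {μ : Measure X}

lemma not_isAddCoboundary_of_ergodic_skewProduct [NeZero μ] {ν : Measure G}
    [IsProbabilityMeasure ν] (hE : Ergodic (skewProduct S g) (μ.prod ν))
    {χ : G →+ AddCircle T} (hχ : Measurable χ) (hν : ∫ y, ((χ y).toCircle : ℂ) ∂ν = 0) :
    ¬ IsAddCoboundary S μ (χ ∘ g) := by
  rintro ⟨R, hR, hRS⟩
  have hF : Measurable fun p : X × G => χ p.2 - R p.1 :=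
    (hχ.comp measurable_snd).sub (hR.comp measurable_fst)
  have hF_comp : (fun p : X × G => χ p.2 - R p.1) ∘ skewProduct S g =ᵐ[μ.prod ν]
      fun p => χ p.2 - R p.1 := by
    filter_upwards [Measure.quasiMeasurePreserving_fst.ae hRS] with p hp
    simp [skewProduct, hp]
  obtain ⟨c, hc⟩ := hE.ae_eq_const_of_ae_eq_comp₀ hF.nullMeasurable hF_comp
  obtain ⟨x, hx⟩ := (Measure.ae_ae_of_ae_prod hc).exists
  have hχ_const : ∀ᵐ y ∂ν, ((χ y).toCircle : ℂ) = (c + R x).toCircle := by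
    filter_upwards [hx] with y hy
    rw [sub_eq_iff_eq_add.1 hy, Function.const_apply]
  rw [integral_congr_ae hχ_const] at hν
  simp at hν

variable [Fact (0 < T)]

lemma UniquelyErgodic.ae_fiberCoeff_eq_zero [IsProbabilityMeasure μ]
    (hS : UniquelyErgodic S) (hμ : MeasurePreserving S μ μ) (hg : Measurable g)
    {κ : Kernel X G} [IsMarkovKernel κ]
    (hκ : MeasurePreserving (skewProduct S g) (μ ⊗ₘ κ) (μ ⊗ₘ κ))
    {χ : G →+ AddCircle T} (hχ : Measurable χ) (hc : ¬ IsAddCoboundary S μ (χ ∘ g)) :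
    ∀ᵐ x ∂μ, fiberCoeff κ χ x = 0 :=
  ae_eq_zero_of_not_isAddCoboundary (hS.ergodic hμ) (measurable_fiberCoeff hχ)
    (fiberCoeff_comp_ae_eq hμ hg hκ hχ) hc

theorem uniquelyErgodic_skewProduct_iff [MeasurableAdd₂ G] [StandardBorelSpace G]
    {ν : Measure G} [IsProbabilityMeasure ν] [ν.IsAddRightInvariant] [IsProbabilityMeasure μ]
    (hS : UniquelyErgodic S) (hμ : MeasurePreserving S μ μ) (hg : Measurable g)
    {ι : Type*} [Countable ι] {χ : ι → G →+ AddCircle T} (hχ : ∀ i, Measurable (χ i))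
    (hν : ∀ i, ∫ y, ((χ i y).toCircle : ℂ) ∂ν = 0)
    (hν_unique : ∀ ν' : Measure G, IsProbabilityMeasure ν' →
      (∀ i, ∫ y, ((χ i y).toCircle : ℂ) ∂ν' = 0) → ν' = ν) :
    UniquelyErgodic (skewProduct S g) ↔ ∀ i, ¬ IsAddCoboundary S μ (χ i ∘ g) := by
  have hprod : MeasurePreserving (skewProduct S g) (μ.prod ν) (μ.prod ν) :=
    measurePreserving_skewProduct hμ hg
  constructor
  · intro hE i
    exact not_isAddCoboundary_of_ergodic_skewProduct (hE.ergodic hprod) (hχ i) (hν i)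
  · intro hcob
    refine ⟨μ.prod ν, ⟨inferInstance, hprod.map_eq⟩, fun ρ ⟨hρ_prob, hρ⟩ => ?_⟩
    have hρ_mp : MeasurePreserving (skewProduct S g) ρ ρ :=
      ⟨measurable_skewProduct hμ.measurable hg, hρ⟩
    obtain ⟨κ, hκ_markov, rfl⟩ := hS.exists_kernel_of_skewProduct hμ hρ_mp
    have hcoeff : ∀ᵐ x ∂μ, ∀ i, fiberCoeff κ (χ i) x = 0 :=
      ae_all_iff.2 fun i => hS.ae_fiberCoeff_eq_zero hμ hg hρ_mp (hχ i) (hcob i)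
    rw [← Measure.compProd_const]
    refine Measure.compProd_congr ?_
    filter_upwards [hcoeff] with x hx
    rw [Kernel.const_apply]
    exact hν_unique (κ x) inferInstance hx

end Furstenberg

section Circle

variable {T : ℝ} [hT : Fact (0 < T)]

lemma measure_ext_of_integral_fourier {ν ν' : Measure (AddCircle T)} [IsFiniteMeasure ν]
    [IsFiniteMeasure ν'] (h : ∀ n : ℤ, ∫ x, fourier n x ∂ν = ∫ x, fourier n x ∂ν') :
    ν = ν' := by
  have hint (m : Measure (AddCircle T)) [IsFiniteMeasure m] (f : C(AddCircle T, ℂ)) :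
      Integrable f m := f.continuous.integrable_of_hasCompactSupport (.of_compactSpace f)
  have hspan : ∀ f ∈ Submodule.span ℂ (Set.range (@fourier T)),
      ∫ x, f x ∂ν = ∫ x, f x ∂ν' := by
    intro f hf
    induction hf using Submodule.span_induction with
    | mem f hf => obtain ⟨n, rfl⟩ := hf; exact h n
    | zero => simp
    | add f₁ f₂ _ _ h₁ h₂ =>
      simp only [ContinuousMap.add_apply]
      rw [integral_add (hint ν f₁) (hint ν f₂), integral_add (hint ν' f₁) (hint ν' f₂), h₁, h₂]
    | smul a f _ hf => simp only [ContinuousMap.smul_apply, integral_smul, hf]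
  refine ext_of_forall_mem_subalgebra_integral_eq_of_pseudoEMetric_complete_countable
    (A := fourierSubalgebra.comap (BoundedContinuousFunction.toContinuousMapStarₐ ℂ)) ?_ ?_
  · intro x y hxy
    obtain ⟨_, ⟨f, hf, rfl⟩, hfxy⟩ := fourierSubalgebra_separatesPoints hxy
    exact ⟨f, ⟨f, ⟨BoundedContinuousFunction.mkOfCompact f, hf, rfl⟩, rfl⟩, hfxy⟩
  · intro f hf
    refine hspan f.toContinuousMap ?_
    rw [← fourierSubalgebra_coe]
    exact hf

lemma integral_fourier_haarAddCircle {n : ℤ} (hn : n ≠ 0) :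
    ∫ x : AddCircle T, fourier n x ∂haarAddCircle = 0 := by
  simpa [fourierCoeff, hn.symm] using congrFun (fourierCoeff_fourier (T := T) n) 0

lemma eq_haarAddCircle_of_integral_fourier_eq_zero {ν : Measure (AddCircle T)}
    [IsProbabilityMeasure ν] (h : ∀ n : ℕ, 1 ≤ n → ∫ x, fourier n x ∂ν = 0) :
    ν = haarAddCircle := by
  refine measure_ext_of_integral_fourier fun n => ?_
  rcases eq_or_ne n 0 with rfl | hn
  · simp
  rw [integral_fourier_haarAddCircle hn]
  have habs : ∫ x, fourier n.natAbs x ∂ν = 0 := h _ (Int.natAbs_pos.2 hn)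
  rcases Int.natAbs_eq n with hpos | hneg
  · rwa [hpos]
  · rw [hneg]
    simp_rw [fourier_neg]
    rw [integral_conj, habs, map_zero]

end Circle

theorem stmt13_general {T : ℝ} [Fact (0 < T)] {X : Type*} [MeasurableSpace X] {S : X → X}
    (hS : UniquelyErgodic S) {μ : Measure X} [IsProbabilityMeasure μ]
    (hμ : MeasurePreserving S μ μ) {g : X → AddCircle T} (hg : Measurable g) :
    UniquelyErgodic (skewProduct S g) ↔ ∀ k : ℕ, 1 ≤ k → ¬ IsAddCoboundary S μ (k • g) := by
  have hiff := uniquelyErgodic_skewProduct_iff (ν := haarAddCircle) hS hμ hg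
    (χ := fun k : {k : ℕ // 1 ≤ k} => nsmulAddMonoidHom (α := AddCircle T) k)
    (fun k => (continuous_nsmul k.1).measurable)
    (fun k => by
      simpa [fourier_apply] using integral_fourier_haarAddCircle (T := T) (n := k.1) (by grind))
    (fun ν _ hν => eq_haarAddCircle_of_integral_fourier_eq_zero fun n hn => by
      simpa [fourier_apply] using hν ⟨n, hn⟩)
  exact hiff.trans Subtype.forall

/-- Furstenberg's criterion. Let `T₀ : Ω₀ → Ω₀` be a uniquely ergodic
continuous map of a compact metric space, with unique invariant Borel probability measure
`γ₀`, let `g : Ω₀ → 𝕋¹` be Borel measurable and `T(ω₀,ζ) = (T₀ω₀, ζ + g(ω₀))` the skew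
product on `Ω = Ω₀ × 𝕋¹`. Then `T` is uniquely ergodic if and only if for every `k ≥ 1`
the equation `R(T₀ω₀) = R(ω₀) + k·g(ω₀)` has no Borel measurable solution
`R : Ω₀ → 𝕋¹` modulo `γ₀`. -/
theorem stmt13
    {Ω₀ : Type*} [MetricSpace Ω₀] [CompactSpace Ω₀] [MeasurableSpace Ω₀] [BorelSpace Ω₀]
    (T₀ : Ω₀ → Ω₀) (hT₀ : Continuous T₀)
    (γ₀ : Measure Ω₀) (hprob : IsProbabilityMeasure γ₀) (hinv : γ₀.map T₀ = γ₀)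
    (huniq : ∀ μ : Measure Ω₀, IsProbabilityMeasure μ → μ.map T₀ = μ → μ = γ₀)
    (g : Ω₀ → T1) (hg : Measurable g) :
    (∃! μ : Measure (Ω₀ × T1), IsProbabilityMeasure μ ∧
        μ.map (fun ω : Ω₀ × T1 => (T₀ ω.1, ω.2 + g ω.1)) = μ) ↔
      ∀ k : ℕ, 1 ≤ k →
        ¬ ∃ R : Ω₀ → T1, Measurable R ∧ ∀ᵐ ω₀ ∂γ₀, R (T₀ ω₀) = R ω₀ + k • g ω₀ :=
  stmt13_general
    ⟨γ₀, ⟨hprob, hinv⟩, fun μ hμ => huniq μ hμ.1 hμ.2⟩ ⟨hT₀.measurable, hinv⟩ hg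
end
end
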